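/- Let H be a Heisenberg group (a group whose commutator subgroup [H,H] is contained in its centre Z(H)) such that the centre Z(H) has finite index in H, and let χ : Z(H) → ℂˣ be a character with ker(χ) ∩ [H,H] = {1}. Then there exists an irreducible complex representation of H with central character χ, and any two irreducible complex representations of H with central character χ are isomorphic as representations of H. -/

import Mathlib

/-- A submodule is invariant under a representation. -/
def Representation.IsInvariantSubmodule {H V : Type*} [Group H] [AddCommGroup V] [Module ℂ V]
    (π : Representation ℂ H V) (W : Submodule ℂ V) : Prop :=
  ∀ (h : H) (v : V), v ∈ W → π h v ∈ W

/-- A representation is irreducible: the space is nonzero and the only invariant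
subspaces are `⊥` and `⊤`. -/
def Representation.IsIrreducibleRep {H V : Type*} [Group H] [AddCommGroup V] [Module ℂ V]
    (π : Representation ℂ H V) : Prop :=
  Nontrivial V ∧ ∀ W : Submodule ℂ V, π.IsInvariantSubmodule W → W = ⊥ ∨ W = ⊤

/-- A representation has central character `χ` if every central element acts by the
corresponding scalar. -/
def Representation.HasCentralCharacter {H V : Type*} [Group H] [AddCommGroup V] [Module ℂ V]
    (π : Representation ℂ H V) (χ : Subgroup.center H →* ℂˣ) : Prop :=
  ∀ (z : Subgroup.center H) (v : V), π (z : H) v = (χ z : ℂ) • v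

namespace SVN

open scoped commutatorElement

variable {H : Type} [Group H]

/-- Sum of a function over coset representatives of the centre. -/
noncomputable def S [Fintype (H ⧸ Subgroup.center H)] {M : Type} [AddCommMonoid M] (F : H → M) : M :=
  ∑ q : H ⧸ Subgroup.center H, F q.out

theorem out_eq (h : H) : ∃ z ∈ Subgroup.center H,
    (QuotientGroup.mk h : H ⧸ Subgroup.center H).out = h * z := by
  obtain ⟨z, hz⟩ := QuotientGroup.mk_out_eq_mul (Subgroup.center H) h
  exact ⟨z, z.2, hz⟩

theorem S_shift [Fintype (H ⧸ Subgroup.center H)] {M : Type} [AddCommMonoid M] (F : H → M)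
    (hF : ∀ h, ∀ z ∈ Subgroup.center H, F (h * z) = F h) (a : H) :
    S (fun h => F (a * h)) = S F := by
  unfold S
  refine Fintype.sum_equiv (MulAction.toPerm a) _ _ fun q => ?_
  have h1 : (MulAction.toPerm a) q = (QuotientGroup.mk (a * q.out) : H ⧸ Subgroup.center H) := by
    conv_lhs => rw [← QuotientGroup.out_eq' q]
    rfl
  rw [h1]
  obtain ⟨z, hz, e⟩ := out_eq (a * q.out)
  rw [e, hF _ z hz]

/-- The commutator pairing. -/
def c (hHeis : commutator H ≤ Subgroup.center H) (χ : Subgroup.center H →* ℂˣ) (g h : H) : ℂ :=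
  (χ ⟨⁅h, g⁻¹⁆, hHeis (Subgroup.commutator_mem_commutator (Subgroup.mem_top _) (Subgroup.mem_top _))⟩ : ℂˣ)

theorem c_mul (hHeis : commutator H ≤ Subgroup.center H) (χ : Subgroup.center H →* ℂˣ) (g a h : H) :
    c hHeis χ g (a * h) = c hHeis χ g a * c hHeis χ g h := by
  unfold c
  rw [← Units.val_mul, ← map_mul]
  congr 2
  apply Subtype.ext
  have hz : ⁅h, g⁻¹⁆ ∈ Subgroup.center H :=
    hHeis (Subgroup.commutator_mem_commutator (Subgroup.mem_top _) (Subgroup.mem_top _))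
  have h1 := Subgroup.mem_center_iff.1 hz (a * g⁻¹ * a⁻¹ * g)
  have h2 := Subgroup.mem_center_iff.1 hz a
  show ⁅a * h, g⁻¹⁆ = ⁅a, g⁻¹⁆ * ⁅h, g⁻¹⁆
  have h3 : ⁅a * h, g⁻¹⁆ = a * ⁅h, g⁻¹⁆ * g⁻¹ * a⁻¹ * g := by
    simp only [commutatorElement_def]; group
  have h4 : ⁅a, g⁻¹⁆ = a * g⁻¹ * a⁻¹ * g := by
    simp only [commutatorElement_def]; group
  rw [h3, h4, h1, h2]; group

theorem c_center (hHeis : commutator H ≤ Subgroup.center H) (χ : Subgroup.center H →* ℂˣ)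
    (g z : H) (hz : z ∈ Subgroup.center H) : c hHeis χ g z = 1 := by
  unfold c
  have : (⟨⁅z, g⁻¹⁆, hHeis (Subgroup.commutator_mem_commutator (Subgroup.mem_top _) (Subgroup.mem_top _))⟩ :
      Subgroup.center H) = 1 := by
    apply Subtype.ext
    show ⁅z, g⁻¹⁆ = 1
    rw [commutatorElement_eq_one_iff_mul_comm]
    exact (Subgroup.mem_center_iff.1 hz _).symm
  rw [this]; simp

theorem S_c [Fintype (H ⧸ Subgroup.center H)] (hHeis : commutator H ≤ Subgroup.center H)
    (χ : Subgroup.center H →* ℂˣ)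
    (hker : ∀ h ∈ commutator H, ∀ hz : h ∈ Subgroup.center H, χ ⟨h, hz⟩ = 1 → h = 1)
    (g : H) (hg : g ∉ Subgroup.center H) : S (c hHeis χ g) = 0 := by
  obtain ⟨a, ha⟩ : ∃ a, c hHeis χ g a ≠ 1 := by
    by_contra! hcon
    apply hg
    rw [← inv_mem_iff, Subgroup.mem_center_iff]
    intro a
    rw [← commutatorElement_eq_one_iff_mul_comm]
    refine hker _ (Subgroup.commutator_mem_commutator (Subgroup.mem_top _) (Subgroup.mem_top _))
      (hHeis (Subgroup.commutator_mem_commutator (Subgroup.mem_top _) (Subgroup.mem_top _))) ?_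
    exact Units.ext (hcon a)
  have h1 := S_shift (c hHeis χ g)
    (fun h z hz => by rw [c_mul, c_center hHeis χ g z hz, mul_one]) a
  have h2 : S (fun h => c hHeis χ g (a * h)) = c hHeis χ g a * S (c hHeis χ g) := by
    simp only [S, c_mul, Finset.mul_sum]
  rw [h2] at h1
  have h3 : (c hHeis χ g a - 1) * S (c hHeis χ g) = 0 := by rw [sub_mul, h1]; ring
  exact (mul_eq_zero.1 h3).resolve_left (sub_ne_zero.2 ha)

section uniq
variable {V₁ V₂ : Type} [AddCommGroup V₁] [Module ℂ V₁] [AddCommGroup V₂] [Module ℂ V₂]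
  (π₁ : Representation ℂ H V₁) (π₂ : Representation ℂ H V₂) (χ : Subgroup.center H →* ℂˣ)

theorem apply_inv_self {V : Type} [AddCommGroup V] [Module ℂ V]
    (π : Representation ℂ H V) (h : H) (v : V) : π h⁻¹ (π h v) = v := by
  rw [← Module.End.mul_apply, ← map_mul]; simp

theorem apply_self_inv {V : Type} [AddCommGroup V] [Module ℂ V]
    (π : Representation ℂ H V) (h : H) (v : V) : π h (π h⁻¹ v) = v := by
  rw [← Module.End.mul_apply, ← map_mul]; simp

/-- conjugate of a linear map -/
noncomputable def F (T : V₁ →ₗ[ℂ] V₂) (h : H) : V₁ →ₗ[ℂ] V₂ := π₂ h ∘ₗ T ∘ₗ π₁ h⁻¹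

theorem F_inv (h₁ : π₁.HasCentralCharacter χ) (h₂ : π₂.HasCentralCharacter χ)
    (T : V₁ →ₗ[ℂ] V₂) (h z : H) (hz : z ∈ Subgroup.center H) :
    F π₁ π₂ T (h * z) = F π₁ π₂ T h := by
  ext v
  have e1 := h₁ ⟨z, hz⟩⁻¹
  have e2 := h₂ ⟨z, hz⟩
  simp only [Subgroup.coe_inv] at e1
  simp only at e2
  simp only [F, LinearMap.comp_apply, mul_inv_rev, map_mul, Module.End.mul_apply, e1, e2, map_smul,
    smul_smul]
  simp

variable [Fintype (H ⧸ Subgroup.center H)]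

theorem avg_intertwine (h₁ : π₁.HasCentralCharacter χ) (h₂ : π₂.HasCentralCharacter χ)
    (T : V₁ →ₗ[ℂ] V₂) (h : H) (v : V₁) :
    S (F π₁ π₂ T) (π₁ h v) = π₂ h (S (F π₁ π₂ T) v) := by
  conv_lhs => rw [← S_shift (F π₁ π₂ T) (F_inv π₁ π₂ χ h₁ h₂ T) h]
  simp only [S, LinearMap.sum_apply, map_sum]
  refine Finset.sum_congr rfl fun q _ => ?_
  simp only [F, LinearMap.comp_apply, mul_inv_rev, map_mul, Module.End.mul_apply, apply_inv_self]

theorem exists_avg_ne (hHeis : commutator H ≤ Subgroup.center H)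
    (hker : ∀ h ∈ commutator H, ∀ hz : h ∈ Subgroup.center H, χ ⟨h, hz⟩ = 1 → h = 1)
    [Nontrivial V₁] [Nontrivial V₂]
    (h₁ : π₁.HasCentralCharacter χ) (h₂ : π₂.HasCentralCharacter χ) :
    ∃ T : V₁ →ₗ[ℂ] V₂, S (F π₁ π₂ T) ≠ 0 := by
  by_contra! hcon
  obtain ⟨v, hv⟩ := exists_ne (0 : V₁)
  obtain ⟨w, hw⟩ := exists_ne (0 : V₂)
  obtain ⟨φ, hφ⟩ : ∃ φ : Module.Dual ℂ V₁, φ v ≠ 0 := by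
    by_contra! hc
    exact hv ((Module.forall_dual_apply_eq_zero_iff ℂ v).1 hc)
  have key : ∀ a : H, ∑ q : H ⧸ Subgroup.center H,
      c hHeis χ q.out a • (φ (π₁ q.out⁻¹ v) • π₂ q.out w) = 0 := by
    intro a
    have h := LinearMap.congr_fun (hcon ((φ ∘ₗ π₁ a).smulRight w)) (π₁ a⁻¹ v)
    simp only [S, LinearMap.sum_apply, LinearMap.zero_apply] at h
    rw [← h]
    refine Finset.sum_congr rfl fun q _ => ?_
    generalize q.out = g
    have e1 : π₁ a (π₁ g⁻¹ (π₁ a⁻¹ v)) = c hHeis χ g a • π₁ g⁻¹ v := by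
      unfold c
      rw [← h₁]
      simp only [← Module.End.mul_apply, ← map_mul]
      congr 2
      simp only [commutatorElement_def]; group
    simp only [F, LinearMap.comp_apply, LinearMap.smulRight_apply, e1, map_smul, smul_eq_mul,
      smul_smul]
  have key2 : ∑ q : H ⧸ Subgroup.center H,
      S (c hHeis χ q.out) • (φ (π₁ q.out⁻¹ v) • π₂ q.out w) = 0 := by
    simp only [S, Finset.sum_smul]
    rw [Finset.sum_comm]
    exact Finset.sum_eq_zero fun q _ => key q.out
  rw [Finset.sum_eq_single (1 : H ⧸ Subgroup.center H)] at key2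
  · have hz : (1 : H ⧸ Subgroup.center H).out ∈ Subgroup.center H := by
      rw [← QuotientGroup.eq_one_iff]; exact QuotientGroup.out_eq' _
    generalize (1 : H ⧸ Subgroup.center H).out = z at key2 hz
    have hS : S (c hHeis χ z) ≠ 0 := by
      have : ∀ a, c hHeis χ z a = 1 := by
        intro a
        unfold c
        have : (⟨⁅a, z⁻¹⁆, hHeis (Subgroup.commutator_mem_commutator (Subgroup.mem_top _) (Subgroup.mem_top _))⟩ :
            Subgroup.center H) = 1 := by
          apply Subtype.ext
          show ⁅a, z⁻¹⁆ = 1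
          rw [commutatorElement_eq_one_iff_mul_comm]
          exact Subgroup.mem_center_iff.1 (inv_mem hz) _
        rw [this]; simp
      simp [S, this]
    have hX : φ (π₁ z⁻¹ v) • π₂ z w = φ v • w := by
      have e1 := h₁ ⟨z, hz⟩⁻¹
      have e2 := h₂ ⟨z, hz⟩
      simp only [Subgroup.coe_inv] at e1
      rw [e1, e2, map_smul, smul_eq_mul, smul_smul, mul_right_comm, ← Units.val_mul, ← map_mul]
      simp
    rw [hX] at key2
    exact smul_ne_zero hS (smul_ne_zero hφ hw) key2
  · intro q _ hq
    rw [S_c hHeis χ hker, zero_smul]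
    rw [← QuotientGroup.eq_one_iff, QuotientGroup.out_eq']
    exact hq
  · simp

theorem schur (i₁ : π₁.IsIrreducibleRep) (i₂ : π₂.IsIrreducibleRep) (T : V₁ →ₗ[ℂ] V₂) (hT : T ≠ 0)
    (hi : ∀ h v, T (π₁ h v) = π₂ h (T v)) :
    ∃ e : V₁ ≃ₗ[ℂ] V₂, ∀ (h : H) (v : V₁), e (π₁ h v) = π₂ h (e v) := by
  have hk : LinearMap.ker T = ⊥ := by
    refine (i₁.2 (LinearMap.ker T) ?_).resolve_right ?_
    · intro h v hv
      rw [LinearMap.mem_ker] at hv ⊢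
      rw [hi, hv, map_zero]
    · intro h; exact hT (LinearMap.ker_eq_top.1 h)
  have hr : LinearMap.range T = ⊤ := by
    refine (i₂.2 (LinearMap.range T) ?_).resolve_left ?_
    · rintro h _ ⟨v, rfl⟩
      exact ⟨π₁ h v, hi h v⟩
    · intro h; exact hT (LinearMap.range_eq_bot.1 h)
  exact ⟨LinearEquiv.ofBijective T ⟨LinearMap.ker_eq_bot.1 hk, LinearMap.range_eq_top.1 hr⟩, hi⟩

end uniq

section exist
variable (χ : Subgroup.center H →* ℂˣ)

/-- The space of functions on `H` transforming by `χ` under the centre. -/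
def Ind : Submodule ℂ (H → ℂ) where
  carrier := {f | ∀ (z : Subgroup.center H) (h : H), f (h * z) = (χ z : ℂ) * f h}
  add_mem' := by
    intro f g hf hg z h
    simp only [Pi.add_apply, hf z h, hg z h, mul_add]
  zero_mem' := by intro z h; simp
  smul_mem' := by
    intro r f hf z h
    simp only [Pi.smul_apply, hf z h, smul_eq_mul]; ring

/-- Right translation. -/
def rho : Representation ℂ H (Ind χ) where
  toFun a :=
    { toFun := fun f => ⟨fun h => f.1 (h * a), by
        intro z h
        show f.1 (h * z * a) = (χ z : ℂ) * f.1 (h * a)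
        rw [mul_assoc, ← Subgroup.mem_center_iff.1 z.2 a, ← mul_assoc]
        exact f.2 z _⟩
      map_add' := fun f g => rfl
      map_smul' := fun r f => rfl }
  map_one' := by ext f h; simp
  map_mul' a b := by ext f h; simp [mul_assoc]

theorem rho_central : (rho χ).HasCentralCharacter χ := by
  intro z f
  apply Subtype.ext
  funext h
  exact f.2 z h

theorem finite_Ind [Fintype (H ⧸ Subgroup.center H)] : FiniteDimensional ℂ (Ind χ) := by
  let r : Ind χ →ₗ[ℂ] (H ⧸ Subgroup.center H → ℂ) :=
    { toFun := fun f q => f.1 q.out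
      map_add' := fun f g => rfl
      map_smul' := fun r f => rfl }
  refine Module.Finite.of_injective r ?_
  rw [← LinearMap.ker_eq_bot, LinearMap.ker_eq_bot']
  intro f hf
  apply Subtype.ext
  funext h
  obtain ⟨z, hz, e⟩ := out_eq h
  have h1 : f.1 ((QuotientGroup.mk h : H ⧸ Subgroup.center H).out) = 0 := congr_fun hf _
  rw [e] at h1
  have h2 := f.2 ⟨z, hz⟩ h
  rw [h1] at h2
  exact (mul_eq_zero.1 h2.symm).resolve_left (Units.ne_zero _)

open Classical in
theorem nontrivial_Ind : Nontrivial (Ind χ) := by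
  let f : H → ℂ := fun h => if hz : h ∈ Subgroup.center H then (χ ⟨h, hz⟩ : ℂ) else 0
  have hf : f ∈ Ind χ := by
    intro z h
    by_cases hz : h ∈ Subgroup.center H
    · have hz2 := mul_mem hz z.2
      simp only [f, dif_pos hz, dif_pos hz2, ← Units.val_mul, ← map_mul]
      congr 2
      apply Subtype.ext
      exact (Subgroup.mem_center_iff.1 z.2 h)
    · have hz2 : h * z ∉ Subgroup.center H := fun hh =>
        hz ((Subgroup.mul_mem_cancel_right _ z.2).1 hh)
      simp only [f, dif_neg hz, dif_neg hz2, mul_zero]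
  refine ⟨⟨⟨f, hf⟩, 0, fun h => ?_⟩⟩
  have h1 : f 1 = 0 := congr_fun (congr_arg Subtype.val h) 1
  simp only [f, dif_pos (one_mem (Subgroup.center H))] at h1
  exact Units.ne_zero _ h1

theorem exists_irr [Fintype (H ⧸ Subgroup.center H)] :
    ∃ (V : Type) (_ : AddCommGroup V) (_ : Module ℂ V) (π : Representation ℂ H V),
        π.IsIrreducibleRep ∧ π.HasCentralCharacter χ := by
  haveI := finite_Ind χ
  haveI := nontrivial_Ind χ
  obtain ⟨W, ⟨hW0, hWi⟩, hmin⟩ := WellFounded.has_min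
    (wellFounded_lt (α := Submodule ℂ (Ind χ)))
    {W | W ≠ ⊥ ∧ (rho χ).IsInvariantSubmodule W} ⟨⊤, top_ne_bot, fun _ _ _ => trivial⟩
  let π : Representation ℂ H W :=
    { toFun := fun h => (rho χ h).restrict (hWi h)
      map_one' := by ext v : 1; apply Subtype.ext; simp
      map_mul' := fun a b => by ext v : 1; apply Subtype.ext; simp }
  have hπ : ∀ h (v : W), ((π h v : W) : Ind χ) = rho χ h v := fun h v => rfl
  refine ⟨W, inferInstance, inferInstance, π, ⟨(Submodule.nontrivial_iff_ne_bot).2 hW0, ?_⟩, ?_⟩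
  · intro U hU
    by_cases hb : U = ⊥
    · exact Or.inl hb
    · right
      have hle : U.map W.subtype ≤ W := Submodule.map_subtype_le W U
      have h1 := hmin (U.map W.subtype) ⟨?_, ?_⟩
      · have h2 : U.map W.subtype = W := by
          by_contra hne
          exact h1 (lt_of_le_of_ne hle hne)
        rw [eq_top_iff]
        intro v _
        have h3 : (v : Ind χ) ∈ U.map W.subtype := by rw [h2]; exact v.2
        obtain ⟨u, hu, e⟩ := h3
        rwa [← Subtype.ext e]
      · intro h
        exact hb (Submodule.map_injective_of_injective W.injective_subtype
          (h.trans (Submodule.map_bot _).symm))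
      · rintro h _ ⟨u, hu, rfl⟩
        exact ⟨π h u, hU h u hu, rfl⟩
  · intro z v
    apply Subtype.ext
    exact rho_central χ z v

end exist

end SVN

/-- Stone–von Neumann theorem for Heisenberg groups with finite central quotient:
existence and uniqueness of the irreducible representation with a given central
character `χ` satisfying `ker χ ∩ [H,H] = 1`. -/
theorem stone_von_neumann_heisenberg
    (H : Type) [Group H]
    (hHeis : commutator H ≤ Subgroup.center H)
    (hfin : (Subgroup.center H).FiniteIndex)
    (χ : Subgroup.center H →* ℂˣ)
    (hker : ∀ h ∈ commutator H, ∀ hz : h ∈ Subgroup.center H, χ ⟨h, hz⟩ = 1 → h = 1) :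
    (∃ (V : Type) (_ : AddCommGroup V) (_ : Module ℂ V) (π : Representation ℂ H V),
        π.IsIrreducibleRep ∧ π.HasCentralCharacter χ) ∧
    (∀ (V₁ V₂ : Type) (_ : AddCommGroup V₁) (_ : Module ℂ V₁)
        (_ : AddCommGroup V₂) (_ : Module ℂ V₂)
        (π₁ : Representation ℂ H V₁) (π₂ : Representation ℂ H V₂),
        π₁.IsIrreducibleRep → π₁.HasCentralCharacter χ →
        π₂.IsIrreducibleRep → π₂.HasCentralCharacter χ →
        ∃ e : V₁ ≃ₗ[ℂ] V₂, ∀ (h : H) (v : V₁), e (π₁ h v) = π₂ h (e v)) := by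
  haveI : Fintype (H ⧸ Subgroup.center H) := Subgroup.fintypeQuotientOfFiniteIndex
  refine ⟨SVN.exists_irr χ, ?_⟩
  intro V₁ V₂ _ _ _ _ π₁ π₂ i₁ h₁ i₂ h₂
  haveI := i₁.1
  haveI := i₂.1
  obtain ⟨T, hT⟩ := SVN.exists_avg_ne π₁ π₂ χ hHeis hker h₁ h₂
  exact SVN.schur π₁ π₂ i₁ i₂ _ hT (SVN.avg_intertwine π₁ π₂ χ h₁ h₂ T)
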